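/- Let θ ∈ ℝ. Define the differential–difference operators φ₁, φ₂ : C¹([0,1],ℂⁿ) → C⁰([0,1],ℂⁿ) × ℂⁿ by φ₁(ζ) = (ζ̇ − T·A(t)·ζ, ζ(0) − e^{−iθ}·ζ(1)) and φ₂(ζ) = (ζ̇ + T·A(t)ᵀ·ζ, ζ(0) − e^{−iθ}·ζ(1)). Then for every ζ ∈ C¹([0,1],ℂⁿ): (i) ζ lies in the kernel of φ₁ if and only if the pair (ζ, ζ(0)) is orthogonal to φ₂(g) for every g ∈ C¹([0,1],ℂⁿ); and (ii) ζ lies in the kernel of φ₂ if and only if the pair (ζ, ζ(0)) is orthogonal to φ₁(g) for every g ∈ C¹([0,1],ℂⁿ). -/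

import Mathlib

open Matrix Set Complex

lemma aux_cont_dot {n : ℕ} {u v : ℝ → Fin n → ℂ} {s : Set ℝ} (hu : ContinuousOn u s)
    (hv : ContinuousOn v s) : ContinuousOn (fun t => star (u t) ⬝ᵥ v t) s := by
  simp only [dotProduct, Pi.star_apply]
  refine continuousOn_finsetSum _ fun i _ => ContinuousOn.mul ?_ (continuousOn_pi.1 hv i)
  exact (continuousOn_pi.1 hu i).star

lemma aux_deriv {n : ℕ} {u : ℝ → Fin n → ℂ} (hu : ContDiffOn ℝ 1 u (Icc 0 1)) {t : ℝ}
    (ht : t ∈ Ioo (0:ℝ) 1) : HasDerivAt u (derivWithin u (Icc 0 1) t) t := by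
  have h := (hu.differentiableOn one_ne_zero t (Ioo_subset_Icc_self ht)).hasDerivWithinAt
  exact h.hasDerivAt (Icc_mem_nhds ht.1 ht.2)

lemma aux_cont_deriv {n : ℕ} {u : ℝ → Fin n → ℂ} (hu : ContDiffOn ℝ 1 u (Icc 0 1)) :
    ContinuousOn (derivWithin u (Icc 0 1)) (Icc 0 1) :=
  hu.continuousOn_derivWithin (uniqueDiffOn_Icc zero_lt_one) le_rfl

lemma aux_ftc {n : ℕ} {u v : ℝ → Fin n → ℂ} (hu : ContDiffOn ℝ 1 u (Icc 0 1))
    (hv : ContDiffOn ℝ 1 v (Icc 0 1)) :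
    (∫ t in (0:ℝ)..1, (star (derivWithin u (Icc 0 1) t) ⬝ᵥ v t
      + star (u t) ⬝ᵥ derivWithin v (Icc 0 1) t))
      = star (u 1) ⬝ᵥ v 1 - star (u 0) ⬝ᵥ v 0 := by
  refine intervalIntegral.integral_eq_sub_of_hasDerivAt_of_le
    (f := fun t => star (u t) ⬝ᵥ v t) zero_le_one
    (aux_cont_dot hu.continuousOn hv.continuousOn) ?_ ?_
  · intro t ht
    have h1 := hasDerivAt_pi.1 (aux_deriv hu ht)
    have h2 := hasDerivAt_pi.1 (aux_deriv hv ht)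
    simp only [dotProduct, Pi.star_apply, ← Finset.sum_add_distrib]
    exact HasDerivAt.fun_sum fun i _ => (h1 i).star.mul (h2 i)
  · apply ContinuousOn.intervalIntegrable
    rw [uIcc_of_le zero_le_one]
    exact (aux_cont_dot (aux_cont_deriv hu) hv.continuousOn).add
      (aux_cont_dot hu.continuousOn (aux_cont_deriv hv))

lemma aux_cont_mulVec {n : ℕ} {B : ℝ → Matrix (Fin n) (Fin n) ℂ} {u : ℝ → Fin n → ℂ} {s : Set ℝ}
    (hB : ContinuousOn B s) (hu : ContinuousOn u s) :
    ContinuousOn (fun t => B t *ᵥ u t) s := by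
  refine continuousOn_pi.2 fun i => ?_
  simp only [mulVec, dotProduct]
  exact continuousOn_finsetSum _ fun j _ =>
    (continuousOn_pi.1 (continuousOn_pi.1 hB i) j).mul (continuousOn_pi.1 hu j)

lemma aux_ident {n : ℕ} (e : ℂ) {B : ℝ → Matrix (Fin n) (Fin n) ℂ}
    (hB : ContinuousOn B (Icc 0 1)) {u g : ℝ → Fin n → ℂ}
    (hu : ContDiffOn ℝ 1 u (Icc 0 1)) (hg : ContDiffOn ℝ 1 g (Icc 0 1)) :
    (∫ t in (0:ℝ)..1, star (u t) ⬝ᵥ (derivWithin g (Icc 0 1) t + (B t)ᴴ *ᵥ g t)) +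
      star (u 0) ⬝ᵥ (g 0 - e • g 1)
    = star (u 1 - star e • u 0) ⬝ᵥ g 1 -
      ∫ t in (0:ℝ)..1, star (derivWithin u (Icc 0 1) t - B t *ᵥ u t) ⬝ᵥ g t := by
  have hw : ContinuousOn (fun t => derivWithin u (Icc 0 1) t - B t *ᵥ u t) (Icc 0 1) :=
    (aux_cont_deriv hu).sub (aux_cont_mulVec hB hu.continuousOn)
  have key : (∫ t in (0:ℝ)..1, star (u t) ⬝ᵥ (derivWithin g (Icc 0 1) t + (B t)ᴴ *ᵥ g t))
      = (star (u 1) ⬝ᵥ g 1 - star (u 0) ⬝ᵥ g 0) -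
      ∫ t in (0:ℝ)..1, star (derivWithin u (Icc 0 1) t - B t *ᵥ u t) ⬝ᵥ g t := by
    rw [← aux_ftc hu hg, ← intervalIntegral.integral_sub]
    · congr 1
      ext t
      rw [dotProduct_add, star_sub, sub_dotProduct, star_mulVec, ← dotProduct_mulVec]
      ring
    · apply ContinuousOn.intervalIntegrable
      rw [uIcc_of_le zero_le_one]
      exact (aux_cont_dot (aux_cont_deriv hu) hg.continuousOn).add
        (aux_cont_dot hu.continuousOn (aux_cont_deriv hg))
    · apply ContinuousOn.intervalIntegrable
      rw [uIcc_of_le zero_le_one]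
      exact aux_cont_dot hw hg.continuousOn
  rw [key, star_sub, sub_dotProduct, dotProduct_sub, star_smul, star_star, smul_dotProduct,
    dotProduct_smul]
  ring

lemma aux_fund {n : ℕ} {w : ℝ → Fin n → ℂ} (hw : ContinuousOn w (Icc 0 1))
    (h : ∀ g : ℝ → Fin n → ℂ, ContDiffOn ℝ 1 g (Icc 0 1) → g 1 = 0 →
      ∫ t in (0:ℝ)..1, star (w t) ⬝ᵥ g t = 0) : ∀ t ∈ Icc (0:ℝ) 1, w t = 0 := by
  have hIoo : ∀ t ∈ Ioo (0:ℝ) 1, w t = 0 := by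
    intro t ht
    ext i
    have hwi : ContinuousOn (fun t => star (w t i)) (Ioo 0 1) :=
      ((continuousOn_pi.1 hw i).star).mono Ioo_subset_Icc_self
    have hae := isOpen_Ioo.ae_eq_zero_of_integral_contDiff_smul_eq_zero
      (μ := MeasureTheory.volume) (f := fun t => star (w t i))
      (hwi.locallyIntegrableOn measurableSet_Ioo) ?_
    · have hEq : EqOn (fun t => star (w t i)) (fun _ => (0:ℂ)) (Ioo 0 1) := by
        refine MeasureTheory.Measure.eqOn_open_of_ae_eq (μ := MeasureTheory.volume) ?_ isOpen_Ioo
          hwi continuousOn_const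
        rw [Filter.EventuallyEq, MeasureTheory.ae_restrict_iff' measurableSet_Ioo]
        exact hae
      have := hEq ht
      simpa using this
    · intro φ hφ hc hs
      have hzero : ∀ x, x ∉ Ioo (0:ℝ) 1 → φ x = 0 := fun x hx =>
        image_eq_zero_of_notMem_tsupport fun h' => hx (hs h')
      have h1 := h (fun t => Pi.single i (φ t : ℂ)) ?_ ?_
      · rw [← h1, intervalIntegral.integral_of_le zero_le_one,
          MeasureTheory.integral_Ioc_eq_integral_Ioo]
        simp only [dotProduct_single, Pi.star_apply]
        rw [MeasureTheory.setIntegral_eq_integral_of_forall_compl_eq_zero]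
        · congr 1
          ext x
          rw [Complex.real_smul, mul_comm]
        · intro x hx
          rw [hzero x hx]; simp
      · refine contDiffOn_pi.2 fun j => ?_
        have h2 : ContDiff ℝ 1 (fun t => (φ t : ℂ)) :=
          Complex.ofRealCLM.contDiff.comp (hφ.of_le (by exact_mod_cast le_top))
        by_cases hj : j = i
        · subst hj
          simpa using h2.contDiffOn
        · simpa [Pi.single_apply, hj] using contDiffOn_const
      · simp [hzero 1 (by simp)]
  have : EqOn w (fun _ => 0) (Icc 0 1) := by
    refine EqOn.of_subset_closure (s := Ioo 0 1) (t := Icc 0 1) hIoo hw continuousOn_const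
      Ioo_subset_Icc_self ?_
    rw [closure_Ioo zero_ne_one]
  exact this

lemma aux_main {n : ℕ} (e : ℂ) (he : e * star e = 1) {B : ℝ → Matrix (Fin n) (Fin n) ℂ}
    (hB : ContinuousOn B (Icc 0 1)) {u : ℝ → Fin n → ℂ} (hu : ContDiffOn ℝ 1 u (Icc 0 1)) :
    ((∀ t ∈ Icc (0:ℝ) 1, derivWithin u (Icc 0 1) t - B t *ᵥ u t = 0) ∧ u 0 - e • u 1 = 0) ↔
    ∀ g : ℝ → Fin n → ℂ, ContDiffOn ℝ 1 g (Icc 0 1) →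
    (∫ t in (0:ℝ)..1, star (u t) ⬝ᵥ (derivWithin g (Icc 0 1) t + (B t)ᴴ *ᵥ g t)) +
      star (u 0) ⬝ᵥ (g 0 - e • g 1) = 0 := by
  have hbc : u 0 - e • u 1 = -(e • (u 1 - star e • u 0)) := by
    rw [smul_sub, smul_smul, he, one_smul]; abel
  have he0 : e ≠ 0 := left_ne_zero_of_mul_eq_one he
  have hbc' : u 0 - e • u 1 = 0 ↔ u 1 - star e • u 0 = 0 := by
    rw [hbc, neg_eq_zero, smul_eq_zero_iff_right he0]
  have hint : (∀ t ∈ Icc (0:ℝ) 1, derivWithin u (Icc 0 1) t - B t *ᵥ u t = 0) →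
      ∀ g : ℝ → Fin n → ℂ,
      ∫ t in (0:ℝ)..1, star (derivWithin u (Icc 0 1) t - B t *ᵥ u t) ⬝ᵥ g t = 0 := by
    intro h g
    rw [intervalIntegral.integral_congr (g := fun _ => 0)]
    · simp
    · intro t ht
      rw [uIcc_of_le zero_le_one] at ht
      simp [h t ht]
  rw [hbc']
  constructor
  · rintro ⟨h1, h2⟩ g hg
    rw [aux_ident e hB hu hg, hint h1, h2]
    simp
  · intro h
    have hw : ∀ t ∈ Icc (0:ℝ) 1, derivWithin u (Icc 0 1) t - B t *ᵥ u t = 0 := by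
      refine aux_fund ((aux_cont_deriv hu).sub (aux_cont_mulVec hB hu.continuousOn)) ?_
      intro g hg hg1
      have := h g hg
      rw [aux_ident e hB hu hg, hg1] at this
      simpa using this
    refine ⟨hw, ?_⟩
    ext i
    have := h (fun _ => Pi.single i 1) contDiffOn_const
    rw [aux_ident e hB hu contDiffOn_const, hint hw, sub_zero, dotProduct_single, mul_one,
      Pi.star_apply, star_eq_zero] at this
    exact this

/-- Proposition 6 of the paper: the complex differential–difference operators
`φ₁(ζ) = (ζ̇ − T·A(t)·ζ, ζ(0) − e^{−iθ}·ζ(1))` and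
`φ₂(ζ) = (ζ̇ + T·A(t)ᵀ·ζ, ζ(0) − e^{−iθ}·ζ(1))` on `C¹([0,1],ℂⁿ)` satisfy:
`ζ ∈ Ker φ₁` iff `(ζ, ζ(0))` is orthogonal (for the Hermitian inner product,
conjugate-linear in the first argument) to the range of `φ₂`, and `ζ ∈ Ker φ₂`
iff `(ζ, ζ(0))` is orthogonal to the range of `φ₁`. -/
theorem kernel_orthogonality_floquet_complex (n : ℕ) (T : ℝ) (hT : 0 < T) (θ : ℝ)
    (A : ℝ → Matrix (Fin n) (Fin n) ℝ) (hA : ContinuousOn A (Icc 0 1))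
    (ζ : ℝ → Fin n → ℂ) (hζ : ContDiffOn ℝ 1 ζ (Icc 0 1)) :
    ((((∀ t ∈ Icc (0:ℝ) 1,
          derivWithin ζ (Icc 0 1) t - (T : ℂ) • ((A t).map (fun r => (r : ℂ)) *ᵥ ζ t) = 0) ∧
        ζ 0 - Complex.exp (-(θ : ℂ) * Complex.I) • ζ 1 = 0) ↔
      ∀ g : ℝ → Fin n → ℂ, ContDiffOn ℝ 1 g (Icc 0 1) →
        (∫ t in (0:ℝ)..1,
            star (ζ t) ⬝ᵥ (derivWithin g (Icc 0 1) t
              + (T : ℂ) • ((A t)ᵀ.map (fun r => (r : ℂ)) *ᵥ g t))) +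
          star (ζ 0) ⬝ᵥ (g 0 - Complex.exp (-(θ : ℂ) * Complex.I) • g 1) = 0) ∧
     (((∀ t ∈ Icc (0:ℝ) 1,
          derivWithin ζ (Icc 0 1) t + (T : ℂ) • ((A t)ᵀ.map (fun r => (r : ℂ)) *ᵥ ζ t) = 0) ∧
        ζ 0 - Complex.exp (-(θ : ℂ) * Complex.I) • ζ 1 = 0) ↔
      ∀ g : ℝ → Fin n → ℂ, ContDiffOn ℝ 1 g (Icc 0 1) →
        (∫ t in (0:ℝ)..1,
            star (ζ t) ⬝ᵥ (derivWithin g (Icc 0 1) t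
              - (T : ℂ) • ((A t).map (fun r => (r : ℂ)) *ᵥ g t))) +
          star (ζ 0) ⬝ᵥ (g 0 - Complex.exp (-(θ : ℂ) * Complex.I) • g 1) = 0)) := by
  have he : Complex.exp (-(θ : ℂ) * Complex.I) * star (Complex.exp (-(θ : ℂ) * Complex.I)) = 1 := by
    rw [Complex.star_def, ← Complex.exp_conj, ← Complex.exp_add]
    simp
  have hAC : ContinuousOn (fun t => (A t).map (fun r => (r : ℂ))) (Icc 0 1) :=
    (continuous_id.matrix_map Complex.continuous_ofReal).comp_continuousOn hA
  have hAT : ContinuousOn (fun t => (A t)ᵀ.map (fun r => (r : ℂ))) (Icc 0 1) :=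
    (continuous_id.matrix_transpose.matrix_map Complex.continuous_ofReal).comp_continuousOn hA
  have hc1 : ∀ t, ((T : ℂ) • (A t).map (fun r => (r : ℂ)))ᴴ
      = (T : ℂ) • (A t)ᵀ.map (fun r => (r : ℂ)) := by
    intro t; ext i j; simp
  have hc2 : ∀ t, (-((T : ℂ) • (A t)ᵀ.map (fun r => (r : ℂ))))ᴴ
      = -((T : ℂ) • (A t).map (fun r => (r : ℂ))) := by
    intro t; ext i j; simp
  constructor
  · have := aux_main _ he (hAC.const_smul (T : ℂ)) hζ
    simpa only [Pi.smul_apply, hc1, smul_mulVec] using this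
  · have := aux_main _ he (hAT.const_smul (T : ℂ)).neg hζ
    simpa only [Pi.smul_apply, hc2, Pi.neg_apply, neg_mulVec, smul_mulVec,
      sub_neg_eq_add, ← sub_eq_add_neg] using this
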